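/- arXiv:2110.01597 — 2 statements merged into one kernel-verified Lean document; each statement's English description precedes it below -/
import Mathlib

section
/- Let b, t, I ∈ M satisfy σ(b) = b and b^{n/d} = t · I · σ(I)^{−1}. Then I^n · w(t) = b^{n²(d+1)/(2d)} · (∏_{j=0}^{d−1} σ^j(I))^{n/d}, where the exponent n²(d+1)/(2d) is an integer because d divides n. -/
/-!
Put `c = b ^ (n / d)`, which is fixed by `σ`, and write the relation as `c * σ I = t * I`. Then
multiplication by `t` turns `I` into `c * σ I`, so `I * ∏_{j<k} σ^j t` telescopes to
`c ^ k * σ^k I`. Since `∏_{j<d} (σ^j t) ^ (d - j)` is the product of the partial products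
`∏_{j<k} σ^j t` for `1 ≤ k ≤ d`, multiplying these relations gives
`I ^ d * ∏_{j<d} (σ^j t) ^ (d - j) = c ^ (d (d + 1) / 2) * ∏_{k=1}^d σ^k I`. Periodicity of
`k ↦ σ^k I` shifts the last product, and the claim is the `n / d`-th power of this identity.
-/

section RangeProducts

variable {M : Type*} [CommMonoid M]

theorem prod_range_pow_sub (f : ℕ → M) (k : ℕ) :
    ∏ j ∈ Finset.range k, f j ^ (k - j) =
      ∏ i ∈ Finset.range k, ∏ j ∈ Finset.range (i + 1), f j := by
  induction k with
  | zero => rfl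
  | succ k ih =>
    calc ∏ j ∈ Finset.range (k + 1), f j ^ (k + 1 - j)
        = ∏ j ∈ Finset.range (k + 1), f j ^ (k - j) * f j := by
          refine Finset.prod_congr rfl fun j hj => ?_
          rw [Nat.succ_sub (Finset.mem_range_succ_iff.mp hj), pow_succ]
      _ = (∏ j ∈ Finset.range k, f j ^ (k - j)) * ∏ j ∈ Finset.range (k + 1), f j := by
          rw [Finset.prod_mul_distrib, Finset.prod_range_succ (fun j => f j ^ (k - j)),
            Nat.sub_self, pow_zero, mul_one]
      _ = ∏ i ∈ Finset.range (k + 1), ∏ j ∈ Finset.range (i + 1), f j := by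
          rw [ih, ← Finset.prod_range_succ (fun i => ∏ j ∈ Finset.range (i + 1), f j)]

theorem prod_range_apply_add_one_of_eq {f : ℕ → M} {k : ℕ} (h : f k = f 0) :
    ∏ j ∈ Finset.range k, f (j + 1) = ∏ j ∈ Finset.range k, f j := by
  cases k with
  | zero => rfl
  | succ k => rw [Finset.prod_range_succ, h, ← Finset.prod_range_succ']

end RangeProducts

theorem mul_sq_mul_add_one_eq_two_mul_mul_choose_two (d m : ℕ) :
    (d * m) ^ 2 * (d + 1) = 2 * d * (m * (d + 1).choose 2 * m) := by
  have h : (d + 1) * d = (d + 1).choose 2 * 2 := by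
    simpa only [Nat.choose_one_right] using Nat.add_one_mul_choose_eq d 1
  linear_combination d * m ^ 2 * h

section TwistedRelation

variable {M : Type*} [CommMonoid M] {σ : Monoid.End M} {c t I : M}

theorem mul_prod_range_pow_apply (hc : σ c = c) (h : c * σ I = t * I) (k : ℕ) :
    I * ∏ j ∈ Finset.range k, (σ ^ j) t = c ^ k * (σ ^ k) I := by
  induction k with
  | zero => simp
  | succ k ih =>
    have hck : (σ ^ k) c = c := by
      rw [Monoid.End.coe_pow]
      exact Function.iterate_fixed hc k
    have hk : c * (σ ^ (k + 1)) I = (σ ^ k) t * (σ ^ k) I := by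
      simpa only [map_mul, hck, pow_succ, Monoid.End.coe_mul, Function.comp_apply]
        using congrArg (σ ^ k) h
    rw [Finset.prod_range_succ, ← mul_assoc, ih, mul_assoc, mul_comm ((σ ^ k) I), ← hk,
      ← mul_assoc, ← pow_succ]

theorem pow_mul_prod_range_pow_apply_pow_sub (hc : σ c = c) (h : c * σ I = t * I) (k : ℕ) :
    I ^ k * ∏ j ∈ Finset.range k, (σ ^ j) t ^ (k - j) =
      c ^ (k + 1).choose 2 * ∏ j ∈ Finset.range k, (σ ^ (j + 1)) I := by
  have hsum : ∑ i ∈ Finset.range k, (i + 1) = (k + 1).choose 2 := by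
    rw [Nat.choose_two_right, ← Finset.sum_range_id, Finset.sum_range_succ', add_zero]
  calc I ^ k * ∏ j ∈ Finset.range k, (σ ^ j) t ^ (k - j)
      = ∏ i ∈ Finset.range k, I * ∏ j ∈ Finset.range (i + 1), (σ ^ j) t := by
        rw [prod_range_pow_sub, Finset.prod_mul_distrib, Finset.prod_const, Finset.card_range]
    _ = ∏ i ∈ Finset.range k, c ^ (i + 1) * (σ ^ (i + 1)) I :=
        Finset.prod_congr rfl fun i _ => mul_prod_range_pow_apply hc h (i + 1)
    _ = c ^ (k + 1).choose 2 * ∏ j ∈ Finset.range k, (σ ^ (j + 1)) I := by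
        rw [Finset.prod_mul_distrib, Finset.prod_pow_eq_pow_sum, hsum]

end TwistedRelation

theorem toMonoidEnd_pow_apply {G M : Type*} [Monoid G] [Monoid M] [MulDistribMulAction G M]
    (g : G) (k : ℕ) (x : M) : (MulDistribMulAction.toMonoidEnd G M g ^ k) x = g ^ k • x :=
  (DFunLike.congr_fun (map_pow (MulDistribMulAction.toMonoidEnd G M) g k) x).symm

theorem stmt5_general {M : Type*} [CommMonoid M] {d n : ℕ} (hd : 0 < d) (hdn : d ∣ n)
    {σ : Monoid.End M} {b t I : M} (hI : (σ ^ d) I = I)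
    (hb : σ (b ^ (n / d)) = b ^ (n / d)) (hbt : b ^ (n / d) * σ I = t * I) :
    2 * d ∣ n ^ 2 * (d + 1) ∧
    I ^ n * ∏ j ∈ Finset.range d, ((σ ^ j) t) ^ (n - j * (n / d)) =
      b ^ (n ^ 2 * (d + 1) / (2 * d)) *
        (∏ j ∈ Finset.range d, (σ ^ j) I) ^ (n / d) := by
  obtain ⟨m, rfl⟩ := hdn
  rw [Nat.mul_div_cancel_left m hd] at hb hbt ⊢
  have hexp := mul_sq_mul_add_one_eq_two_mul_mul_choose_two d m
  refine ⟨⟨_, hexp⟩, ?_⟩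
  rw [hexp, Nat.mul_div_cancel_left _ (Nat.mul_pos two_pos hd)]
  calc I ^ (d * m) * ∏ j ∈ Finset.range d, (σ ^ j) t ^ (d * m - j * m)
      = (I ^ d * ∏ j ∈ Finset.range d, (σ ^ j) t ^ (d - j)) ^ m := by
        simp only [mul_pow, ← Finset.prod_pow, ← pow_mul, Nat.sub_mul]
    _ = ((b ^ m) ^ (d + 1).choose 2 * ∏ j ∈ Finset.range d, (σ ^ j) I) ^ m := by
        rw [pow_mul_prod_range_pow_apply_pow_sub hb hbt,
          prod_range_apply_add_one_of_eq (f := fun j => (σ ^ j) I) hI]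
    _ = b ^ (m * (d + 1).choose 2 * m) * (∏ j ∈ Finset.range d, (σ ^ j) I) ^ m := by
        rw [mul_pow, ← pow_mul, ← pow_mul, mul_assoc m]

/-- With `σ^d = id`, `σ(b) = b` and `b^{n/d} = t·I·σ(I)⁻¹`, one has
`I^n · w(t) = b^{n²(d+1)/(2d)} · (∏_{j<d} σ^j(I))^{n/d}`, the exponent
`n²(d+1)/(2d)` being an integer. -/
theorem stmt5 {M : Type*} [CommGroup M] (d n : ℕ) (hd : 0 < d) (hn : 0 < n)
    (hdn : d ∣ n) (σ : MulAut M) (hσ : σ ^ d = 1) (b t I : M)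
    (hb : σ b = b) (hbt : b ^ (n / d) = t * I * (σ I)⁻¹) :
    2 * d ∣ n ^ 2 * (d + 1) ∧
    I ^ n * ∏ j ∈ Finset.range d, ((σ ^ j) t) ^ (n - j * (n / d)) =
      b ^ (n ^ 2 * (d + 1) / (2 * d)) *
        (∏ j ∈ Finset.range d, (σ ^ j) I) ^ (n / d) := by
  simpa only [toMonoidEnd_pow_apply] using! stmt5_general
    (σ := MulDistribMulAction.toMonoidEnd (MulAut M) M σ) hd hdn
    (by rw [toMonoidEnd_pow_apply, hσ, one_smul]) ((map_pow σ b _).trans (by rw [hb]))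
    (eq_mul_inv_iff_mul_eq.mp hbt)
end

section
/- Let b, t, I ∈ M with σ(b) = b and b^{n/d} = t · I · σ(I)^{−1}. Then: (i) the vector v = (I, bI, b²I, …, b^{m−1}I) ∈ M^m satisfies σ'(v)·v^{−1} = (t·b^{−1}, b^{−1}, …, b^{−1}); and (ii) if moreover ∏_{j=0}^{d−1} σ^j(t) = b^{−1}, then setting w = ∏_{j=0}^{d−1} σ^j(t)^{n − j·n/d}, the vector u = (w, bw, b²w, …, b^{m−1}w) ∈ M^m satisfies σ'(u)·u^{−1} = (b^{−1}·t^{−n}, b^{−1}, …, b^{−1}). -/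
/-- The twisted cyclic shift `σ'(a_1, …, a_m) = (σ(a_m), a_1, …, a_{m−1})` on `M^m`
(indexed by `Fin m`): the `0`-th entry of `σ' a` is `σ` applied to the last entry of
`a`, and the `i`-th entry is the `(i-1)`-st entry of `a` for `i ≠ 0`. -/
def twistedShift {M : Type*} [CommGroup M] (σ : MulAut M) {m : ℕ}
    (a : Fin m → M) : Fin m → M :=
  fun i =>
    if (i : ℕ) = 0 then σ (a ⟨m - 1, Nat.sub_lt i.pos Nat.one_pos⟩)
    else a ⟨(i : ℕ) - 1, Nat.lt_of_le_of_lt (Nat.sub_le _ _) i.isLt⟩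

/-!
On a geometric vector `(w, b w, …, b ^ (m - 1) w)` with `σ b = b`, the quotient by which `σ'` moves
it is `b⁻¹` in every entry but the first, where it is `b ^ m * σ w * w⁻¹ * b⁻¹`. So everything
comes down to computing `σ w * w⁻¹`. For `w = I` this is the hypothesis on `I`. For the other
choice, put `N k = t * σ t * ⋯ * σ ^ (k - 1) t`. Since `t * σ (N k) = N (k + 1)`, the product
`W = N 1 * ⋯ * N d = ∏ (σ ^ j t) ^ (d - j)` satisfies the telescoping identity
`t ^ d * σ W = W * σ (N d)`, as in Hilbert 90. As `w = W ^ m` and `N d = b⁻¹` is fixed by `σ`,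
this reads `σ w * w⁻¹ = b ^ (-m) * t ^ (-n)`.
-/

section PartialNorm

variable {G M : Type*} [Monoid G] [CommMonoid M] [MulDistribMulAction G M]

/-- The partial norm `x * g • x * ⋯ * g ^ (k - 1) • x` of `x` along `g`; when `g ^ k = 1` it is the
norm of `x` for the cyclic group of order `k`. -/
def partialNorm (g : G) (k : ℕ) (x : M) : M :=
  ∏ j ∈ Finset.range k, g ^ j • x

/-- The product `partialNorm g 1 x * ⋯ * partialNorm g k x`, written with the powers of each
`g ^ j • x` collected: it solves the equation of Hilbert 90 up to a norm. -/
def partialNormProd (g : G) (k : ℕ) (x : M) : M :=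
  ∏ j ∈ Finset.range k, (g ^ j • x) ^ (k - j)

theorem mul_smul_partialNorm (g : G) (k : ℕ) (x : M) :
    x * g • partialNorm g k x = partialNorm g (k + 1) x := by
  simp only [partialNorm, Finset.prod_range_succ', Finset.smul_prod', smul_smul, ← pow_succ',
    pow_zero, one_smul, mul_comm x]

theorem partialNormProd_succ (g : G) (k : ℕ) (x : M) :
    partialNormProd g (k + 1) x = partialNormProd g k x * partialNorm g (k + 1) x := by
  have hsplit : ∏ j ∈ Finset.range k, (g ^ j • x) ^ (k + 1 - j) =
      partialNormProd g k x * partialNorm g k x := by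
    rw [partialNormProd, partialNorm, ← Finset.prod_mul_distrib]
    refine Finset.prod_congr rfl fun j hj => ?_
    rw [Nat.succ_sub (Finset.mem_range.mp hj).le, pow_succ]
  rw [partialNormProd, Finset.prod_range_succ, hsplit, Nat.add_sub_cancel_left, pow_one, mul_assoc,
    partialNorm, partialNorm, Finset.prod_range_succ]

theorem pow_mul_smul_partialNormProd (g : G) (k : ℕ) (x : M) :
    x ^ k * g • partialNormProd g k x = partialNormProd g k x * g • partialNorm g k x := by
  induction k with
  | zero => simp only [partialNormProd, partialNorm, Finset.range_zero, Finset.prod_empty, pow_zero]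
  | succ k ih =>
    calc x ^ (k + 1) * g • partialNormProd g (k + 1) x
      _ = (x ^ k * g • partialNormProd g k x) * (x * g • partialNorm g (k + 1) x) := by
        rw [partialNormProd_succ, smul_mul', pow_succ, mul_mul_mul_comm]
      _ = partialNormProd g k x * (x * g • partialNorm g k x) * g • partialNorm g (k + 1) x := by
        rw [ih]
        ac_rfl
      _ = partialNormProd g (k + 1) x * g • partialNorm g (k + 1) x := by
        rw [mul_smul_partialNorm, partialNormProd_succ]

theorem partialNormProd_pow (g : G) (k m : ℕ) (x : M) :
    partialNormProd g k x ^ m = ∏ j ∈ Finset.range k, (g ^ j • x) ^ (k * m - j * m) := by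
  simp only [partialNormProd, ← Finset.prod_pow, ← pow_mul, Nat.sub_mul]

end PartialNorm

section TwistedShift

variable {M : Type*} [CommGroup M]

theorem twistedShift_zero (σ : MulAut M) {m : ℕ} (a : Fin (m + 1) → M) :
    twistedShift σ a 0 = σ (a (Fin.last m)) :=
  rfl

theorem twistedShift_succ (σ : MulAut M) {m : ℕ} (a : Fin (m + 1) → M) (i : Fin m) :
    twistedShift σ a i.succ = a i.castSucc :=
  rfl

theorem twistedShift_geom_mul_inv {σ : MulAut M} {m : ℕ} {b s w : M} (hb : σ b = b)
    (hw : b ^ m * σ w = s * w) :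
    twistedShift σ (fun i : Fin m => b ^ (i : ℕ) * w) * (fun i : Fin m => b ^ (i : ℕ) * w)⁻¹ =
      fun i : Fin m => if (i : ℕ) = 0 then s * b⁻¹ else b⁻¹ := by
  funext i
  rw [Pi.mul_apply, Pi.inv_apply, mul_inv_eq_iff_eq_mul]
  cases m with
  | zero => exact i.elim0
  | succ m =>
    cases i using Fin.cases with
    | zero =>
      have hlast : b ^ m * σ w = s * b⁻¹ * w := by
        rw [mul_right_comm, ← hw, pow_succ, mul_right_comm, mul_inv_cancel_right]
      simpa only [twistedShift_zero, Fin.val_last, Fin.val_zero, map_mul, map_pow, hb, if_true,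
        pow_zero, one_mul] using hlast
    | succ i =>
      simp only [twistedShift_succ, Fin.val_castSucc, Fin.val_succ, Nat.succ_ne_zero, if_false,
        pow_succ', mul_assoc, inv_mul_cancel_left]

theorem pow_mul_map_partialNormProd_pow {σ : MulAut M} {d : ℕ} {b t : M} (hb : σ b = b)
    (ht : partialNorm σ d t = b⁻¹) (m : ℕ) :
    b ^ m * σ (partialNormProd σ d t ^ m) =
      (t ^ (d * m))⁻¹ * partialNormProd σ d t ^ m := by
  have hilbert : t ^ d * σ (partialNormProd σ d t) = partialNormProd σ d t * b⁻¹ := by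
    simpa only [MulAut.smul_def, ht, map_inv, hb] using pow_mul_smul_partialNormProd σ d t
  have hbase : b * σ (partialNormProd σ d t) = (t ^ d)⁻¹ * partialNormProd σ d t := by
    rw [eq_inv_mul_iff_mul_eq, mul_left_comm, hilbert, mul_comm, inv_mul_cancel_right]
  rw [map_pow, ← mul_pow, hbase, mul_pow, inv_pow, pow_mul]

end TwistedShift

theorem stmt13_general {M : Type*} [CommGroup M] (d n m : ℕ) (hn : n = d * m) (σ : MulAut M)
    (b t I : M) (hb : σ b = b) :
    (b ^ m = t * I * (σ I)⁻¹ →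
      twistedShift σ (fun i : Fin m => b ^ (i : ℕ) * I) *
          (fun i : Fin m => b ^ (i : ℕ) * I)⁻¹ =
        fun i : Fin m => if (i : ℕ) = 0 then t * b⁻¹ else b⁻¹) ∧
    ((∏ j ∈ Finset.range d, (σ ^ j) t = b⁻¹) →
      twistedShift σ
          (fun i : Fin m =>
            b ^ (i : ℕ) * ∏ j ∈ Finset.range d, ((σ ^ j) t) ^ (n - j * m)) *
          (fun i : Fin m =>
            b ^ (i : ℕ) * ∏ j ∈ Finset.range d, ((σ ^ j) t) ^ (n - j * m))⁻¹ =
        fun i : Fin m => if (i : ℕ) = 0 then b⁻¹ * (t ^ n)⁻¹ else b⁻¹) := by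
  subst hn
  refine ⟨fun hI => twistedShift_geom_mul_inv hb (eq_mul_inv_iff_mul_eq.mp hI), fun ht => ?_⟩
  have hw := pow_mul_map_partialNormProd_pow hb ht m
  rw [partialNormProd_pow] at hw
  rw [mul_comm b⁻¹]
  exact twistedShift_geom_mul_inv hb hw

/-- For `b, t, I ∈ M` with `σ(b) = b` and `b^{n/d} = t·I·σ(I)⁻¹`:
(i) `v = (I, bI, …, b^{m−1}I)` satisfies `σ'(v)·v⁻¹ = (t·b⁻¹, b⁻¹, …, b⁻¹)`;
(ii) if moreover `∏_{j<d} σ^j(t) = b⁻¹` then, with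
`w = ∏_{j<d} σ^j(t)^{n−j·n/d}`, the vector `u = (w, bw, …, b^{m−1}w)` satisfies
`σ'(u)·u⁻¹ = (b⁻¹·t^{−n}, b⁻¹, …, b⁻¹)`. -/
theorem stmt13 {M : Type*} [CommGroup M] (d n : ℕ) (hd : 0 < d) (hn : 0 < n)
    (hdn : d ∣ n) (σ : MulAut M) (hσ : σ ^ d = 1) (m : ℕ) (hm : m = n / d)
    (b t I : M) (hb : σ b = b) (hbt : b ^ (n / d) = t * I * (σ I)⁻¹) :
    (twistedShift σ (fun i : Fin m => b ^ (i : ℕ) * I) *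
        (fun i : Fin m => b ^ (i : ℕ) * I)⁻¹ =
      fun i : Fin m => if (i : ℕ) = 0 then t * b⁻¹ else b⁻¹) ∧
    ((∏ j ∈ Finset.range d, (σ ^ j) t = b⁻¹) →
      (twistedShift σ
          (fun i : Fin m =>
            b ^ (i : ℕ) * ∏ j ∈ Finset.range d, ((σ ^ j) t) ^ (n - j * (n / d))) *
          (fun i : Fin m =>
            b ^ (i : ℕ) * ∏ j ∈ Finset.range d, ((σ ^ j) t) ^ (n - j * (n / d)))⁻¹ =
        fun i : Fin m => if (i : ℕ) = 0 then b⁻¹ * (t ^ n)⁻¹ else b⁻¹)) := by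
  subst hm
  exact (stmt13_general d n (n / d) (Nat.mul_div_cancel' hdn).symm σ b t I hb).imp_left (· hbt)
end
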